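/- (The truncated factorization defines a probability distribution.) Let variables be indexed by Fin n with variable i taking values in a finite nonempty type α i, let Pa i ⊆ {j : j < i} for each i, and for each i let c i be a conditional probability table: for every assignment pa of values to Pa i, c i pa x ≥ 0 for all x : α i and ∑_x c i pa x = 1. Then for every subset S of the variables and every assignment s of values to S, the truncated factorization has total mass one: ∑ over full assignments v with v restricted to S equal to s of ∏_{i ∉ S} c i (v restricted to Pa i) (v i) = 1. (In particular, taking S = ∅, the joint distribution ∏_i c i (v restricted to Pa i)(v i) sums to 1 over all assignments v.) -/

import Mathlib

open scoped Classical

/-!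
Let `m` be a minimal free variable. All parents of `m` are fixed, so its factor depends only on the
value of `m`; conditioning on that value `x` shows that the truncated mass of `s` is the
`c m`-weighted average over `x` of the truncated masses of `s` extended by `m ↦ x`. When every
variable is fixed, the only term is the empty product.
-/

section TruncatedFactorization

variable {ι : Type*} {α : ι → Type*}

/-- The full assignment `v` restricts to the partial assignment `s` on `S`. -/
def AgreesWith {S : Finset ι} (v : ∀ j, α j) (s : ∀ j, j ∈ S → α j) : Prop :=
  ∀ j (h : j ∈ S), v j = s j h

theorem agreesWith_univ_iff [Fintype ι] (v : ∀ j, α j)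
    (s : ∀ j, j ∈ (Finset.univ : Finset ι) → α j) :
    AgreesWith v s ↔ v = fun j => s j (Finset.mem_univ j) := by
  simp [AgreesWith, funext_iff]

theorem agreesWith_piCons_iff [DecidableEq ι] {S : Finset ι} {m : ι} (hm : m ∉ S)
    (v : ∀ j, α j) (x : α m) (s : ∀ j, j ∈ S → α j) :
    AgreesWith v (Finset.Pi.cons S m x s) ↔ x = v m ∧ AgreesWith v s := by
  have cons_of_mem (j : ι) (hj : j ∈ S) :
      Finset.Pi.cons S m x s j (Finset.mem_insert_of_mem hj) = s j hj :=
    Finset.Pi.cons_ne (ne_of_mem_of_not_mem hj hm).symm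
  constructor
  · intro h
    refine ⟨?_, fun j hj => ?_⟩
    · rw [h m (Finset.mem_insert_self m S), Finset.Pi.cons_same]
    · rw [h j (Finset.mem_insert_of_mem hj), cons_of_mem]
  · rintro ⟨rfl, h⟩ j hj
    obtain rfl | hjS := Finset.mem_insert.mp hj
    · rw [Finset.Pi.cons_same]
    · rw [h j hjS, cons_of_mem]

variable [Fintype ι] [DecidableEq ι] [∀ i, Fintype (α i)] {R : Type*} [CommSemiring R]
  {Pa : ι → Finset ι} (c : ∀ i, (∀ j, j ∈ Pa i → α j) → α i → R)

/-- The total mass of the truncated factorization for the partial assignment `s` on `S`: the product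
of the tables `c i` of the variables outside `S`, summed over the full assignments restricting to
`s`. The tables may take values in any commutative semiring. -/
noncomputable def truncatedMass (S : Finset ι) (s : ∀ j, j ∈ S → α j) : R :=
  ∑ v : ∀ j, α j, if AgreesWith v s then ∏ i ∈ Sᶜ, c i (fun j _ => v j) (v i) else 0

theorem truncatedMass_univ (s : ∀ j, j ∈ (Finset.univ : Finset ι) → α j) :
    truncatedMass c Finset.univ s = 1 := by
  simp [truncatedMass, agreesWith_univ_iff]

theorem truncatedMass_eq_sum_insert {S : Finset ι} {m : ι} (hm : m ∉ S) (hPa : Pa m ⊆ S)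
    (s : ∀ j, j ∈ S → α j) :
    truncatedMass c S s =
      ∑ x, c m (fun j hj => s j (hPa hj)) x *
        truncatedMass c (insert m S) (Finset.Pi.cons S m x s) := by
  simp only [truncatedMass, Finset.mul_sum]
  rw [Finset.sum_comm]
  refine Finset.sum_congr rfl fun v _ => ?_
  by_cases hv : AgreesWith v s
  · have parents_eq : (fun j (_ : j ∈ Pa m) => v j) = fun j hj => s j (hPa hj) :=
      funext₂ fun j hj => hv j (hPa hj)
    have prod_eq : ∏ i ∈ Sᶜ, c i (fun j _ => v j) (v i) =
        c m (fun j hj => s j (hPa hj)) (v m) *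
          ∏ i ∈ (insert m S)ᶜ, c i (fun j _ => v j) (v i) := by
      rw [Finset.compl_insert, ← parents_eq]
      exact (Finset.mul_prod_erase Sᶜ (fun i => c i (fun j _ => v j) (v i))
        (Finset.mem_compl.mpr hm)).symm
    simp [agreesWith_piCons_iff hm, hv, prod_eq]
  · simp [agreesWith_piCons_iff hm, hv]

theorem truncated_factorization_total_mass_one_general [Preorder ι]
    {S : Finset ι} (hPa : ∀ i ∉ S, ∀ j ∈ Pa i, j < i)
    (hc_sum : ∀ i ∉ S, ∀ pa, ∑ x, c i pa x = 1) (s : ∀ j, j ∈ S → α j) :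
    truncatedMass c S s = 1 := by
  induction S using WellFoundedGT.induction with
  | ind S ih =>
    obtain rfl | hS := eq_or_ne S Finset.univ
    · exact truncatedMass_univ c s
    have compl_nonempty : Sᶜ.Nonempty := by
      rwa [Finset.nonempty_iff_ne_empty, ne_eq, Finset.compl_eq_empty_iff]
    obtain ⟨m, hm_min⟩ := Sᶜ.exists_minimal compl_nonempty
    have hm : m ∉ S := Finset.mem_compl.mp hm_min.prop
    have parents_subset : Pa m ⊆ S := fun j hj => by
      simpa using hm_min.not_prop_of_lt (hPa m hm j hj)
    have mass_insert (x : α m) :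
        truncatedMass c (insert m S) (Finset.Pi.cons S m x s) = 1 :=
      ih (insert m S) (Finset.ssubset_insert hm)
        (fun i hi => hPa i (mt Finset.mem_insert_of_mem hi))
        (fun i hi => hc_sum i (mt Finset.mem_insert_of_mem hi)) _
    simp only [truncatedMass_eq_sum_insert c hm parents_subset, mass_insert, mul_one]
    exact hc_sum m hm _

end TruncatedFactorization

/-- The truncated factorization defines a probability distribution.
Variables are indexed by `Fin n`, variable `i` takes values in a finite nonempty type
`α i`, the parent set `Pa i` is contained in `{j | j < i}` (acyclicity via the topological
order), and each `c i` is a conditional probability table: nonnegative and summing to `1`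
over the values of variable `i`, for every assignment of values to `Pa i`.  Then for every
subset `S` of the variables and every assignment `s` of values to `S`, the truncated
factorization `∑_{v : v|_S = s} ∏_{i ∉ S} c i (v|_{Pa i}) (v i)` equals `1`. -/
theorem truncated_factorization_total_mass_one
    {n : ℕ} (α : Fin n → Type) [∀ i, Fintype (α i)] [∀ i, Nonempty (α i)]
    (Pa : Fin n → Finset (Fin n))
    (hPa : ∀ i : Fin n, ∀ j ∈ Pa i, j < i)
    (c : ∀ i : Fin n, (∀ j, j ∈ Pa i → α j) → α i → ℝ)
    (hc_nonneg : ∀ (i : Fin n) (pa : ∀ j, j ∈ Pa i → α j) (x : α i), 0 ≤ c i pa x)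
    (hc_sum : ∀ (i : Fin n) (pa : ∀ j, j ∈ Pa i → α j), ∑ x : α i, c i pa x = 1)
    (S : Finset (Fin n)) (s : ∀ j, j ∈ S → α j) :
    (∑ v : ∀ j : Fin n, α j,
        if (∀ j (h : j ∈ S), v j = s j h)
        then ∏ i ∈ Sᶜ, c i (fun j _ => v j) (v i) else 0) = 1 := by
  rw [← truncated_factorization_total_mass_one_general c (fun i _ => hPa i)
    (fun i _ => hc_sum i) s]
  unfold truncatedMass AgreesWith
  congr!
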